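/- For every integer n ≥ 1, the sum over all compositions α = (a₁,…,a_k) of n of (−1)^k · n!/(a₁!·a₂!·⋯·a_k!) equals (−1)^n. -/

import Mathlib

namespace Composition

/-- The composition of `n + 1` with first block `i + 1` followed by the blocks of `c`. -/
def consBlock {n : ℕ} (i : Fin (n + 1)) (c : Composition (n - i)) : Composition (n + 1) where
  blocks := (i + 1) :: c.blocks
  blocks_pos := by
    intro a ha
    rcases List.mem_cons.1 ha with rfl | h
    · exact Nat.succ_pos _
    · exact c.blocks_pos h
  blocks_sum := by
    have := i.is_lt
    rw [List.sum_cons, c.blocks_sum]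
    omega

theorem consBlock_bijective (n : ℕ) :
    Function.Bijective
      (fun p : Σ i : Fin (n + 1), Composition (n - i) => consBlock p.1 p.2) := by
  constructor
  · rintro ⟨i, c⟩ ⟨j, d⟩ h
    have hb : ((i : ℕ) + 1) :: c.blocks = ((j : ℕ) + 1) :: d.blocks := congrArg blocks h
    obtain ⟨hij, hcd⟩ := List.cons.inj hb
    obtain rfl : i = j := Fin.ext (Nat.succ.inj hij)
    obtain rfl : c = d := Composition.ext hcd
    rfl
  · rintro ⟨_ | ⟨a, l⟩, hpos, hsum⟩
    · simp at hsum
    · have ha : 0 < a := hpos List.mem_cons_self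
      rw [List.sum_cons] at hsum
      refine ⟨⟨⟨a - 1, by omega⟩, ⟨l, fun h => hpos (List.mem_cons_of_mem _ h), ?_⟩⟩, ?_⟩
      · show l.sum = n - (a - 1)
        omega
      · apply Composition.ext
        show (a - 1 + 1) :: l = a :: l
        rw [Nat.sub_add_cancel ha]

/-- Splitting a sum of products over compositions according to the first block. -/
theorem sum_prod_map_blocks_succ {R : Type*} [CommSemiring R] (f : ℕ → R) (n : ℕ) :
    ∑ c : Composition (n + 1), (c.blocks.map f).prod =
      ∑ i ∈ Finset.range (n + 1),
        f (i + 1) * ∑ c : Composition (n - i), (c.blocks.map f).prod := by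
  rw [← (consBlock_bijective n).sum_comp, Fintype.sum_sigma,
    Finset.sum_range fun i => f (i + 1) * ∑ c : Composition (n - i), (c.blocks.map f).prod]
  simp [consBlock, Finset.mul_sum]

theorem prod_map_factorial_blocks_dvd {n : ℕ} (c : Composition n) :
    (c.blocks.map Nat.factorial).prod ∣ n.factorial := by
  have h := Nat.prod_factorial_dvd_factorial_sum Finset.univ c.blocksFun
  rwa [c.sum_blocksFun, ← List.prod_ofFn, ← Function.comp_def Nat.factorial, ← List.map_ofFn,
    c.ofFn_blocksFun] at h

theorem prod_map_neg_inv_factorial (l : List ℕ) :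
    (l.map fun a => -((a.factorial : ℚ)⁻¹)).prod =
      (-1) ^ l.length / ((l.map Nat.factorial).prod : ℕ) := by
  induction l with
  | nil => simp
  | cons a l ih =>
    simp only [List.map_cons, List.prod_cons, List.length_cons, ih, Nat.cast_mul, pow_succ]
    have := Nat.cast_ne_zero (R := ℚ).2 a.factorial_ne_zero
    field_simp

theorem sum_range_neg_one_pow_div_factorial (n : ℕ) :
    ∑ i ∈ Finset.range (n + 2),
      (i.factorial : ℚ)⁻¹ * ((-1) ^ (n + 1 - i) / ((n + 1 - i).factorial : ℚ)) = 0 := by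
  have h := add_pow (1 : ℚ) (-1) (n + 1)
  have hn := Nat.cast_ne_zero (R := ℚ).2 (n + 1).factorial_ne_zero
  rw [add_neg_cancel, zero_pow n.succ_ne_zero] at h
  apply mul_left_cancel₀ hn
  rw [mul_zero, h, Finset.mul_sum]
  refine Finset.sum_congr rfl fun i hi => ?_
  rw [Nat.cast_choose ℚ (Nat.lt_succ_iff.1 (Finset.mem_range.1 hi))]
  simp only [one_pow, one_mul]
  ring

theorem sum_prod_neg_inv_factorial (n : ℕ) :
    ∑ c : Composition n, (c.blocks.map fun a => -((a.factorial : ℚ)⁻¹)).prod =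
      (-1) ^ n / (n.factorial : ℚ) := by
  induction n using Nat.strong_induction_on with
  | _ n ih =>
    cases n with
    | zero =>
      have h (c : Composition 0) : c.blocks = [] := c.blocks_eq_nil.2 rfl
      simp [h, composition_card]
    | succ n =>
      rw [sum_prod_map_blocks_succ]
      have key := sum_range_neg_one_pow_div_factorial n
      rw [Finset.sum_range_succ'] at key
      rw [Finset.sum_congr rfl fun i _ => by rw [ih (n - i) (by omega)]]
      simp only [neg_mul, Finset.sum_neg_distrib]
      simp only [Nat.add_sub_add_right, Nat.factorial_zero, Nat.cast_one, inv_one, one_mul,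
        Nat.sub_zero] at key
      linarith

end Composition

/-- for `n ≥ 1`,
`Σ_{α = (a₁,…,a_k) ⊨ n} (−1)^k · n!/(a₁!⋯a_k!) = (−1)^n`. -/
theorem statement_9 (n : ℕ) (hn : 1 ≤ n) :
    ∑ c : Composition n,
      (-1 : ℤ) ^ c.length *
        ((n.factorial / (c.blocks.map Nat.factorial).prod : ℕ) : ℤ) =
      (-1 : ℤ) ^ n := by
  have h := Composition.sum_prod_neg_inv_factorial n
  rw [eq_div_iff (Nat.cast_ne_zero.2 n.factorial_ne_zero), Finset.sum_mul] at h
  apply Int.cast_injective (α := ℚ)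
  simp only [Int.cast_sum, Int.cast_mul, Int.cast_pow, Int.cast_neg, Int.cast_one,
    Int.cast_natCast]
  rw [← h]
  refine Finset.sum_congr rfl fun c _ => ?_
  rw [Composition.prod_map_neg_inv_factorial, Nat.cast_div_charZero
    c.prod_map_factorial_blocks_dvd, c.blocks_length]
  ring
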